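/- A $(v,m;k_1,\dots,k_m;1,\dots,1)$-GSEDF exists if and only if either $m=2$ and $v=k_1k_2+1$, or $k_i=1$ for all $i$ and $v=m$. -/

import Mathlib

/-- The number of times `g` occurs in the multiset `Δ(A,B) = {x - y : x ∈ A, y ∈ B}`. -/
noncomputable def extDiffCount {G : Type*} [AddCommGroup G] (A B : Finset G) (g : G) : ℕ :=
  letI := Classical.decEq G
  ((A ×ˢ B).filter (fun p => p.1 - p.2 = g)).card

/-- `{D i}` is a `(v, m; k₁,…,k_m; λ₁,…,λ_m)`-GSEDF in the finite abelian group `G`. -/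
def IsGSEDF {G : Type*} [AddCommGroup G] [Fintype G] (v m : ℕ)
    (D : Fin m → Finset G) (k lam : Fin m → ℕ) : Prop :=
  Fintype.card G = v ∧
  (∀ i, (D i).card = k i) ∧
  (∀ i, 0 < k i) ∧ (∀ i, 0 < lam i) ∧
  (∀ i j, i ≠ j → Disjoint (D i) (D j)) ∧
  ∀ i, ∀ g : G, g ≠ 0 →
    (∑ j ∈ Finset.univ.filter (· ≠ i), extDiffCount (D i) (D j) g) = lam i

/-!
Counting differences gives `kᵢ ∑_{j ≠ i} kⱼ = v - 1`. If `m ≥ 3` and `x ≠ y` lie in `Dᵢ`, write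
`x - y = a - b` with `a ∈ Dₚ`, `p ≠ i`, and `b ∈ Dⱼ`. Were `j ≠ i`, then `x - a = y - b`
would represent the same external difference of `Dᵢ` twice; so `b ∈ Dᵢ`, and `y - x = b - a` is an
external difference between `Dᵢ` and `Dₚ`. As this happens for at least two values of `p`,
`y - x` is represented twice, a contradiction, and so `kᵢ = 1`.

Conversely, in `ℤ/(ab + 1)` every nonzero element is a difference of an element of
`{0, …, a - 1}` and one of `{a, 2a, …, ba}`; there are only `ab` pairs for the `ab` nonzero
elements, so each arises exactly once and `0` does not arise.
-/

open Finset

theorem sum_ite_eq_zero_const_add {α : Type*} [Fintype α] [DecidableEq α] (x : α) (l : ℕ) :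
    ∑ y, (if y = x then 0 else l) + l = l * Fintype.card α := by
  rw [sum_ite, sum_const_zero, zero_add, sum_const, filter_ne', smul_eq_mul, ← add_one_mul,
    card_erase_add_one (mem_univ x), card_univ, mul_comm]

section ExtDiffCount

variable {G : Type*} [AddCommGroup G] {A B : Finset G}

theorem extDiffCount_pos {g : G} : 0 < extDiffCount A B g ↔ ∃ a ∈ A, ∃ b ∈ B, a - b = g := by
  simp [extDiffCount, card_pos, Finset.Nonempty, and_assoc]

theorem extDiffCount_zero_eq_zero : extDiffCount A B 0 = 0 ↔ Disjoint A B := by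
  rw [← not_iff_not, ← ne_eq, ← Nat.pos_iff_ne_zero, extDiffCount_pos, not_disjoint_iff]
  simp [sub_eq_zero]

theorem extDiffCount_neg (A B : Finset G) (g : G) :
    extDiffCount A B (-g) = extDiffCount B A g := by
  unfold extDiffCount
  refine card_equiv (Equiv.prodComm G G) fun p => ?_
  simp [and_comm, ← neg_eq_iff_eq_neg]

theorem extDiffCount_singleton [DecidableEq G] (a b g : G) :
    extDiffCount {a} {b} g = if a - b = g then 1 else 0 := by
  simp [extDiffCount, filter_singleton, apply_ite card]

variable [Fintype G]

theorem sum_extDiffCount (A B : Finset G) : ∑ g, extDiffCount A B g = #A * #B := by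
  classical
  rw [← card_product, card_eq_sum_card_fiberwise (f := fun p : G × G => p.1 - p.2) (t := univ)
    (by simp)]
  exact sum_congr rfl fun g _ => by unfold extDiffCount; congr

theorem extDiffCount_eq_ite_of_card_mul_card_lt [DecidableEq G]
    (hcard : #A * #B < Fintype.card G) (hpos : ∀ g ≠ 0, 0 < extDiffCount A B g) (g : G) :
    extDiffCount A B g = if g = 0 then 0 else 1 := by
  have hle : ∀ g ∈ univ, (if g = 0 then 0 else 1) ≤ extDiffCount A B g := by
    intro g _
    split_ifs with hg
    exacts [Nat.zero_le _, hpos g hg]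
  have hsum : ∑ g : G, (if g = 0 then 0 else 1) = ∑ g, extDiffCount A B g := by
    refine (sum_le_sum hle).antisymm ?_
    have := sum_ite_eq_zero_const_add (0 : G) 1
    rw [sum_extDiffCount]
    omega
  exact ((sum_eq_sum_iff_of_le hle).1 hsum g (mem_univ g)).symm

end ExtDiffCount

theorem filter_ne_eq_singleton_fin_two {i j : Fin 2} (hij : i ≠ j) : univ.filter (· ≠ i) = {j} := by
  decide +revert

namespace IsGSEDF

variable {G : Type*} [AddCommGroup G] [Fintype G] {v m : ℕ} {D : Fin m → Finset G}
  {k lam : Fin m → ℕ} {i : Fin m}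

theorem exists_sub_eq (h : IsGSEDF v m D k lam) (i : Fin m) {g : G} (hg : g ≠ 0) :
    ∃ a ∈ D i, ∃ j ≠ i, ∃ b ∈ D j, a - b = g := by
  obtain ⟨-, -, -, hlam, -, hsum⟩ := h
  have hpos := hlam i
  rw [← hsum i g hg, sum_pos_iff] at hpos
  obtain ⟨j, hj, hjg⟩ := hpos
  obtain ⟨a, ha, b, hb, hab⟩ := extDiffCount_pos.1 hjg
  exact ⟨a, ha, j, (mem_filter.1 hj).2, b, hb, hab⟩

theorem sub_ne_zero_of_mem (h : IsGSEDF v m D k lam) {j : Fin m} (hij : i ≠ j) {a b : G}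
    (ha : a ∈ D i) (hb : b ∈ D j) : a - b ≠ 0 := by
  obtain ⟨-, -, -, -, hdisj, -⟩ := h
  exact sub_ne_zero.2 (disjoint_iff_ne.1 (hdisj i j hij) a ha b hb)

theorem eq_and_eq_of_sub_eq_sub (h : IsGSEDF v m D k lam) (hi : lam i = 1) {j j' : Fin m}
    (hj : j ≠ i) (hj' : j' ≠ i) {a a' b b' : G} (ha : a ∈ D i) (ha' : a' ∈ D i)
    (hb : b ∈ D j) (hb' : b' ∈ D j') (hab : a - b = a' - b') : j = j' ∧ a = a' := by
  have hg := h.sub_ne_zero_of_mem hj.symm ha hb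
  obtain ⟨-, -, -, -, -, hsum⟩ := h
  have hone := ((hsum i _ hg).trans hi).le
  unfold extDiffCount at hone
  rw [← card_sigma, card_le_one_iff] at hone
  have heq := @hone ⟨j, a, b⟩ ⟨j', a', b'⟩ (by simp [hj, ha, hb])
    (by simp [hj', ha', hb', hab])
  simp only [Sigma.mk.injEq, heq_eq_eq, Prod.mk.injEq] at heq
  exact ⟨heq.1, heq.2.1⟩

theorem exists_sub_eq_sub_of_mem (h : IsGSEDF v m D k lam) (hi : lam i = 1) {x y : G}
    (hx : x ∈ D i) (hy : y ∈ D i) (hxy : x ≠ y) {p : Fin m} (hp : p ≠ i) :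
    ∃ a ∈ D i, ∃ b ∈ D p, a - b = x - y := by
  obtain ⟨b, hb, j, -, a, ha, hba⟩ := h.exists_sub_eq p (sub_ne_zero.2 hxy.symm)
  obtain rfl | hji := eq_or_ne j i
  · exact ⟨a, ha, b, hb, by rw [← neg_sub b a, hba, neg_sub]⟩
  · have hyx : y - b = x - a := by
      rw [sub_eq_sub_iff_add_eq_add] at hba ⊢
      rw [add_comm y a, add_comm x b, hba, add_comm]
    exact absurd (h.eq_and_eq_of_sub_eq_sub hi hp hji hy hx hb ha hyx).2 hxy.symm

theorem card_eq_one_of_three_le (h : IsGSEDF v m D k lam) (hm : 3 ≤ m) (hi : lam i = 1) :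
    k i = 1 := by
  by_contra hne
  have hcard : 1 < #(D i) := by
    obtain ⟨-, hcard, hk, -⟩ := h
    have := hk i
    rw [hcard]
    omega
  obtain ⟨x, hx, y, hy, hxy⟩ := one_lt_card.1 hcard
  obtain ⟨p, hp, q, hq, hpq⟩ : ∃ p ∈ univ.erase i, ∃ q ∈ univ.erase i, p ≠ q := by
    rw [← one_lt_card, card_erase_of_mem (mem_univ i), card_univ, Fintype.card_fin]
    omega
  have hpi := ne_of_mem_erase hp
  have hqi := ne_of_mem_erase hq
  obtain ⟨a, ha, b, hb, hab⟩ := h.exists_sub_eq_sub_of_mem hi hx hy hxy hpi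
  obtain ⟨c, hc, d, hd, hcd⟩ := h.exists_sub_eq_sub_of_mem hi hx hy hxy hqi
  exact hpq (h.eq_and_eq_of_sub_eq_sub hi hpi hqi ha hc hb hd (hab.trans hcd.symm)).1

theorem mul_sum_add_eq (h : IsGSEDF v m D k lam) (i : Fin m) :
    k i * ∑ j ∈ univ.filter (· ≠ i), k j + lam i = lam i * v := by
  classical
  obtain ⟨hv, hcard, -, -, hdisj, hsum⟩ := h
  have hcount (g : G) : ∑ j ∈ univ.filter (· ≠ i), extDiffCount (D i) (D j) g =
      if g = 0 then 0 else lam i := by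
    split_ifs with hg
    · subst hg
      exact sum_eq_zero fun j hj =>
        extDiffCount_zero_eq_zero.2 (hdisj i j (mem_filter.1 hj).2.symm)
    · exact hsum i g hg
  calc k i * ∑ j ∈ univ.filter (· ≠ i), k j + lam i
      = ∑ g, ∑ j ∈ univ.filter (· ≠ i), extDiffCount (D i) (D j) g + lam i := by
        rw [sum_comm, mul_sum]
        simp only [sum_extDiffCount, hcard]
    _ = ∑ g : G, (if g = 0 then 0 else lam i) + lam i := by simp only [hcount]
    _ = lam i * v := by rw [sum_ite_eq_zero_const_add, hv]

theorem eq_mul_add_one {D : Fin 2 → Finset G} {k lam : Fin 2 → ℕ} {i j : Fin 2}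
    (h : IsGSEDF v 2 D k lam) (hi : lam i = 1) (hij : i ≠ j) : v = k i * k j + 1 := by
  simpa [filter_ne_eq_singleton_fin_two hij, hi] using (h.mul_sum_add_eq i).symm

theorem eq_of_forall_card_eq_one (h : IsGSEDF v m D k lam) (hk : ∀ j, k j = 1)
    (hi : lam i = 1) : v = m := by
  have hcount := h.mul_sum_add_eq i
  simp only [hk, hi, one_mul, filter_ne', sum_const, smul_eq_mul, mul_one] at hcount
  rwa [card_erase_add_one (mem_univ i), card_univ, Fintype.card_fin, eq_comm] at hcount

end IsGSEDF

section Constructions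

variable {G : Type*} [AddCommGroup G] [Fintype G] {m : ℕ}

theorem isGSEDF_singleton (e : Fin m ≃ G) :
    IsGSEDF m m (fun i => {e i}) (fun _ => 1) fun _ => 1 := by
  classical
  refine ⟨by simpa using (Fintype.card_congr e).symm, fun i => card_singleton _,
    fun _ => one_pos, fun _ => one_pos, fun i j hij => by simpa using hij, fun i g hg => ?_⟩
  have hsub (j : Fin m) : e i - e j = g ↔ j = e.symm (e i - g) := by
    rw [Equiv.eq_symm_apply, eq_sub_iff_add_eq, sub_eq_iff_eq_add', eq_comm]
  have hne : e.symm (e i - g) ≠ i := by simpa [Equiv.symm_apply_eq] using hg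
  simp [extDiffCount_singleton, hsub, hne]

theorem isGSEDF_two_of_extDiffCount_eq {D : Fin 2 → Finset G} {l : ℕ}
    (hne : ∀ i, (D i).Nonempty) (hdisj : Disjoint (D 0) (D 1)) (hl : 0 < l)
    (h : ∀ g ≠ 0, extDiffCount (D 0) (D 1) g = l) :
    IsGSEDF (Fintype.card G) 2 D (fun i => #(D i)) fun _ => l := by
  refine ⟨rfl, fun _ => rfl, fun i => (hne i).card_pos, fun _ => hl, ?_, ?_⟩
  · simp [Fin.forall_fin_two, hdisj, hdisj.symm]
  · refine Fin.forall_fin_two.2 ⟨fun g hg => ?_, fun g hg => ?_⟩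
    · rw [filter_ne_eq_singleton_fin_two zero_ne_one, sum_singleton, h g hg]
    · rw [filter_ne_eq_singleton_fin_two one_ne_zero, sum_singleton, ← extDiffCount_neg,
        h (-g) (neg_ne_zero.2 hg)]

/-- The set `{0, 1, …, a - 1}` in `ℤ/(ab + 1)`, the first block of the two-set construction. -/
def initialSegment (a b : ℕ) : Finset (ZMod (a * b + 1)) :=
  (range a).image fun r : ℕ => (r : ZMod (a * b + 1))

/-- The set `{a, 2a, …, ba}` in `ℤ/(ab + 1)`, the second block of the two-set construction. -/
def stepMultiples (a b : ℕ) : Finset (ZMod (a * b + 1)) :=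
  (Icc 1 b).image fun s : ℕ => (s * a : ZMod (a * b + 1))

variable (a b : ℕ)

theorem card_initialSegment_le : #(initialSegment a b) ≤ a :=
  card_image_le.trans_eq (card_range a)

theorem card_stepMultiples_le : #(stepMultiples a b) ≤ b :=
  card_image_le.trans_eq (by simp)

variable {a b}

theorem exists_initialSegment_sub_stepMultiples_eq {g : ZMod (a * b + 1)} (hg : g ≠ 0) :
    ∃ x ∈ initialSegment a b, ∃ y ∈ stepMultiples a b, x - y = g := by
  have hpos : 0 < g.val := ZMod.val_pos.2 hg
  have hlt : g.val - 1 < a * b := by have := g.val_lt; omega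
  have ha : 0 < a := Nat.pos_of_mul_pos_right (Nat.zero_lt_of_lt hlt)
  obtain ⟨q, r, hqb, hra, hval⟩ : ∃ q r, q < b ∧ r < a ∧ g.val = a * q + r + 1 := by
    refine ⟨(g.val - 1) / a, (g.val - 1) % a, Nat.div_lt_of_lt_mul hlt, Nat.mod_lt _ ha, ?_⟩
    rw [Nat.div_add_mod, Nat.sub_add_cancel hpos]
  refine ⟨r, mem_image_of_mem _ (mem_range.2 hra), ((b - q : ℕ) * a),
    mem_image_of_mem _ (mem_Icc.2 ⟨by omega, by omega⟩), ?_⟩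
  have hzero : (a * b + 1 : ZMod (a * b + 1)) = 0 := by
    exact_mod_cast ZMod.natCast_self (a * b + 1)
  calc (r : ZMod (a * b + 1)) - (b - q : ℕ) * a
      = (a * q + r + 1 : ℕ) - (a * b + 1) := by
        rw [Nat.cast_sub hqb.le]
        push_cast
        ring
    _ = g := by rw [hzero, sub_zero, ← hval, ZMod.natCast_zmod_val]

theorem extDiffCount_initialSegment_stepMultiples (g : ZMod (a * b + 1)) :
    extDiffCount (initialSegment a b) (stepMultiples a b) g = if g = 0 then 0 else 1 := by
  refine extDiffCount_eq_ite_of_card_mul_card_lt ?_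
    (fun g hg => extDiffCount_pos.2 (exists_initialSegment_sub_stepMultiples_eq hg)) g
  rw [ZMod.card, Nat.lt_succ_iff]
  exact Nat.mul_le_mul (card_initialSegment_le a b) (card_stepMultiples_le a b)

theorem card_initialSegment_and_card_stepMultiples (ha : 0 < a) (hb : 0 < b) :
    #(initialSegment a b) = a ∧ #(stepMultiples a b) = b := by
  have hmul : #(initialSegment a b) * #(stepMultiples a b) = a * b := by
    have hsum := sum_ite_eq_zero_const_add (0 : ZMod (a * b + 1)) 1
    simp only [← extDiffCount_initialSegment_stepMultiples, sum_extDiffCount, ZMod.card] at hsum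
    omega
  refine (mul_eq_mul_iff_eq_and_eq_of_pos (card_initialSegment_le a b)
    (card_stepMultiples_le a b) ?_ hb).1 hmul
  exact pos_of_mul_pos_left (hmul ▸ Nat.mul_pos ha hb) (Nat.zero_le _)

theorem isGSEDF_initialSegment_stepMultiples {k : Fin 2 → ℕ} (hk : ∀ i, 0 < k i) :
    IsGSEDF (k 0 * k 1 + 1) 2 ![initialSegment (k 0) (k 1), stepMultiples (k 0) (k 1)] k
      fun _ => 1 := by
  set D := ![initialSegment (k 0) (k 1), stepMultiples (k 0) (k 1)]
  have hcard : ∀ i, #(D i) = k i :=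
    Fin.forall_fin_two.2 (card_initialSegment_and_card_stepMultiples (hk 0) (hk 1))
  have hcount (g : ZMod (k 0 * k 1 + 1)) :
      extDiffCount (D 0) (D 1) g = if g = 0 then 0 else 1 :=
    extDiffCount_initialSegment_stepMultiples g
  have h := isGSEDF_two_of_extDiffCount_eq (D := D) (fun i => card_pos.1 (hcard i ▸ hk i))
    (extDiffCount_zero_eq_zero.1 (by simp [hcount])) one_pos fun g hg => by simp [hcount, hg]
  simpa only [hcard, ZMod.card] using h

end Constructions

/-- a `(v, m; k₁,...,k_m; 1,...,1)`-GSEDF exists iff either `m = 2` and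
`v = k₁k₂ + 1`, or all `k i = 1` and `v = m`. -/
theorem gsedf_all_one_existence (v m : ℕ) (hm : 2 ≤ m) (k : Fin m → ℕ)
    (hk : ∀ i, 0 < k i) :
    (∃ (G : Type) (instG : AddCommGroup G) (instF : Fintype G)
        (D : Fin m → Finset G),
        @IsGSEDF G instG instF v m D k (fun _ => 1)) ↔
      ((m = 2 ∧ ∀ i j : Fin m, i ≠ j → v = k i * k j + 1) ∨
       ((∀ i, k i = 1) ∧ v = m)) := by
  constructor
  · rintro ⟨G, _, _, D, h⟩
    obtain rfl | hm2 := eq_or_ne m 2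
    · exact .inl ⟨rfl, fun i j hij => h.eq_mul_add_one rfl hij⟩
    · have hone (i : Fin m) : k i = 1 := h.card_eq_one_of_three_le (by omega) rfl
      exact .inr ⟨hone, h.eq_of_forall_card_eq_one (i := ⟨0, by omega⟩) hone rfl⟩
  · rintro (⟨rfl, hv⟩ | ⟨hone, rfl⟩)
    · rw [hv 0 1 zero_ne_one]
      exact ⟨_, _, _, _, isGSEDF_initialSegment_stepMultiples hk⟩
    · obtain rfl : k = fun _ => 1 := funext hone
      have : NeZero v := ⟨by omega⟩
      exact ⟨ZMod v, _, _, _, isGSEDF_singleton (ZMod.finEquiv v).toEquiv⟩
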